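/- Let α and β be LIF expressions such that O^syn(β) ∩ I^syn(β) = ∅. Then the LIF expression α ; β is equivalent to the LIF expression cyl^r_{O^syn(β)}(α) ∩ cyl^l_{O^syn(α)}(β). -/

import Mathlib

/-- A binary relation on valuations (BRV). -/
abbrev BRV (V dom : Type*) := Set ((V → dom) × (V → dom))

namespace BRV

variable {V dom : Type*}

/-- `ν1` and `ν2` agree on the set `Y` of variables. -/
def AgreeOn (ν1 ν2 : V → dom) (Y : Set V) : Prop := ∀ y ∈ Y, ν1 y = ν2 y

/-- Composition of BRVs. -/
def comp (A B : BRV V dom) : BRV V dom :=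
  {p | ∃ ν3, (p.1, ν3) ∈ A ∧ (ν3, p.2) ∈ B}

/-- Left cylindrification. -/
def cyll (Z : Set V) (A : BRV V dom) : BRV V dom :=
  {p | ∃ ν1', (ν1', p.2) ∈ A ∧ AgreeOn ν1' p.1 Zᶜ}

/-- Right cylindrification. -/
def cylr (Z : Set V) (A : BRV V dom) : BRV V dom :=
  {p | ∃ ν2', (p.1, ν2') ∈ A ∧ AgreeOn ν2' p.2 Zᶜ}

/-- Left selection. -/
def sell (x y : V) (A : BRV V dom) : BRV V dom := {p ∈ A | p.1 x = p.1 y}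

/-- Right selection. -/
def selr (x y : V) (A : BRV V dom) : BRV V dom := {p ∈ A | p.2 x = p.2 y}

/-- Left-to-right selection. -/
def sellr (x y : V) (A : BRV V dom) : BRV V dom := {p ∈ A | p.1 x = p.2 y}


end BRV


/-- A global BRV: a function from interpretations to BRVs.
`I` is the type of interpretations. -/
abbrev GBRV (V dom I : Type*) := I → BRV V dom

/-- Semantic outputs of a global BRV. -/
def Osem {V dom I : Type*} (Q : GBRV V dom I) : Set V :=
  {x | ∃ (D : I) (p : (V → dom) × (V → dom)), p ∈ Q D ∧ p.1 x ≠ p.2 x}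

/-- `X` determines `Q` on `Y`. -/
def Determines {V dom I : Type*} (Q : GBRV V dom I) (X Y : Set V) : Prop :=
  ∀ (D : I), ∀ p ∈ Q D, ∀ ν1' : V → dom, BRV.AgreeOn ν1' p.1 X →
    ∃ ν2' : V → dom, BRV.AgreeOn ν2' p.2 Y ∧ (ν1', ν2') ∈ Q D

/-- Semantic inputs of a global BRV. -/
def Isem {V dom I : Type*} (Q : GBRV V dom I) : Set V :=
  {x | ¬ Determines Q ({x}ᶜ) (Osem Q)}

-- `ν` patched with the `X`-valuation `ν'` (the values of `ν'` outside `X` are irrelevant).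
open Classical in
noncomputable def patch {V dom : Type*} (ν ν' : V → dom) (X : Set V) : V → dom :=
  fun v => if v ∈ X then ν' v else ν v

/-- A global BRV is inertially cylindrified on `X`. -/
def InertCyl {V dom I : Type*} (Q : GBRV V dom I) (X : Set V) : Prop :=
  (∀ x ∈ X, x ∉ Osem Q) ∧
  ∀ (D : I), ∀ p ∈ Q D, ∀ ν' : V → dom,
    (patch p.1 ν' X, patch p.2 ν' X) ∈ Q D

/-- A module vocabulary: each module name has an arity and an input arity. -/
structure Vocab (Name : Type*) where
  ar : Name → ℕ
  iar : Name → ℕ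
  iar_le : ∀ M, iar M ≤ ar M

/-- LIF expressions over a module vocabulary. -/
inductive LIF (Name V : Type*) (voc : Vocab Name) : Type _ where
  | idE : LIF Name V voc
  | atom (M : Name) (xs ys : List V)
      (hx : xs.length = voc.iar M) (hy : ys.length = voc.ar M - voc.iar M) :
      LIF Name V voc
  | union (a b : LIF Name V voc) : LIF Name V voc
  | inter (a b : LIF Name V voc) : LIF Name V voc
  | diff  (a b : LIF Name V voc) : LIF Name V voc
  | comp  (a b : LIF Name V voc) : LIF Name V voc
  | cyll (Z : Finset V) (a : LIF Name V voc) : LIF Name V voc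
  | cylr (Z : Finset V) (a : LIF Name V voc) : LIF Name V voc
  | sellr (x y : V) (a : LIF Name V voc) : LIF Name V voc
  | sell (x y : V) (a : LIF Name V voc) : LIF Name V voc
  | selr (x y : V) (a : LIF Name V voc) : LIF Name V voc

/-- An interpretation assigns to each module name a relation over `dom`,
represented as a set of lists. -/
abbrev Interp (Name dom : Type*) := Name → Set (List dom)

namespace LIF

variable {Name V dom : Type*} {voc : Vocab Name}

/-- The semantics of a LIF expression under an interpretation. -/
def sem (D : Interp Name dom) : LIF Name V voc → BRV V dom
  | .idE => {p | p.1 = p.2}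
  | .atom M xs ys _ _ =>
      {p | (xs.map p.1 ++ ys.map p.2) ∈ D M ∧ BRV.AgreeOn p.1 p.2 {v | v ∈ ys}ᶜ}
  | .union a b => a.sem D ∪ b.sem D
  | .inter a b => a.sem D ∩ b.sem D
  | .diff a b  => a.sem D \ b.sem D
  | .comp a b  => BRV.comp (a.sem D) (b.sem D)
  | .cyll Z a  => BRV.cyll (↑Z) (a.sem D)
  | .cylr Z a  => BRV.cylr (↑Z) (a.sem D)
  | .sellr x y a => BRV.sellr x y (a.sem D)
  | .sell x y a  => BRV.sell x y (a.sem D)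
  | .selr x y a  => BRV.selr x y (a.sem D)

/-- The global BRV induced by a LIF expression. -/
def gsem (dom : Type*) (α : LIF Name V voc) : GBRV V dom (Interp Name dom) :=
  fun D => α.sem D

end LIF

namespace LIF

variable {Name V : Type*} {voc : Vocab Name} [DecidableEq V]

/-- Syntactic outputs of a LIF expression. -/
def Osyn : LIF Name V voc → Finset V
  | .idE => ∅
  | .atom _ _ ys _ _ => ys.toFinset
  | .union a b => a.Osyn ∪ b.Osyn
  | .inter a b => a.Osyn ∩ b.Osyn
  | .diff a _  => a.Osyn
  | .comp a b  => a.Osyn ∪ b.Osyn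
  | .cyll Z a  => a.Osyn ∪ Z
  | .cylr Z a  => a.Osyn ∪ Z
  | .sellr x y a => if x = y then a.Osyn \ {x} else a.Osyn
  | .sell _ _ a  => a.Osyn
  | .selr _ _ a  => a.Osyn

/-- Syntactic inputs of a LIF expression. -/
def Isyn : LIF Name V voc → Finset V
  | .idE => ∅
  | .atom _ xs _ _ _ => xs.toFinset
  | .union a b => a.Isyn ∪ b.Isyn ∪ ((a.Osyn \ b.Osyn) ∪ (b.Osyn \ a.Osyn))
  | .inter a b => a.Isyn ∪ b.Isyn ∪ ((a.Osyn \ b.Osyn) ∪ (b.Osyn \ a.Osyn))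
  | .diff a b  => a.Isyn ∪ b.Isyn ∪ ((a.Osyn \ b.Osyn) ∪ (b.Osyn \ a.Osyn))
  | .comp a b  => a.Isyn ∪ (b.Isyn \ a.Osyn)
  | .cyll Z a  => a.Isyn \ Z
  | .cylr _ a  => a.Isyn
  | .sellr x y a =>
      if x = y then (if y ∈ a.Osyn then a.Isyn ∪ {x} else a.Isyn)
      else (if y ∈ a.Osyn then a.Isyn ∪ {x} else a.Isyn ∪ {x, y})
  | .sell x y a => if x = y then a.Isyn else a.Isyn ∪ {x, y}
  | .selr x y a => if x = y then a.Isyn else a.Isyn ∪ ({x, y} \ a.Osyn)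

end LIF

theorem LIF.inertia {Name V : Type*} {voc : Vocab Name} [DecidableEq V] {dom : Type*}
    (D : Interp Name dom) (α : LIF Name V voc) :
    ∀ ν1 ν2 : V → dom, (ν1, ν2) ∈ α.sem D → ∀ v, v ∉ α.Osyn → ν1 v = ν2 v := by
  induction α with
  | idE => intro ν1 ν2 h v _; exact congrFun h v
  | atom M xs ys hx hy =>
    intro ν1 ν2 h v hv
    exact h.2 v (by simpa [LIF.Osyn] using hv)
  | union a b iha ihb =>
    intro ν1 ν2 h v hv
    simp only [LIF.Osyn, Finset.mem_union, not_or] at hv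
    rcases h with h | h
    · exact iha _ _ h v hv.1
    · exact ihb _ _ h v hv.2
  | inter a b iha ihb =>
    intro ν1 ν2 h v hv
    simp only [LIF.Osyn, Finset.mem_inter] at hv
    by_cases ha : v ∈ a.Osyn
    · exact ihb _ _ h.2 v (fun hb => hv ⟨ha, hb⟩)
    · exact iha _ _ h.1 v ha
  | diff a b iha ihb => intro ν1 ν2 h v hv; exact iha _ _ h.1 v hv
  | comp a b iha ihb =>
    rintro ν1 ν2 ⟨ν3, h1, h2⟩ v hv
    simp only [LIF.Osyn, Finset.mem_union, not_or] at hv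
    exact (iha _ _ h1 v hv.1).trans (ihb _ _ h2 v hv.2)
  | cyll Z a iha =>
    rintro ν1 ν2 ⟨ν3, h1, h2⟩ v hv
    simp only [LIF.Osyn, Finset.mem_union, not_or] at hv
    exact (h2 v (by simpa using hv.2)).symm.trans (iha _ _ h1 v hv.1)
  | cylr Z a iha =>
    rintro ν1 ν2 ⟨ν3, h1, h2⟩ v hv
    simp only [LIF.Osyn, Finset.mem_union, not_or] at hv
    exact (iha _ _ h1 v hv.1).trans (h2 v (by simpa using hv.2))
  | sellr x y a iha =>
    rintro ν1 ν2 ⟨h1, h2⟩ v hv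
    have := iha _ _ h1 v
    simp only [LIF.Osyn] at hv
    grind
  | sell x y a iha => rintro ν1 ν2 ⟨h1, h2⟩ v hv; exact iha _ _ h1 v hv
  | selr x y a iha => rintro ν1 ν2 ⟨h1, h2⟩ v hv; exact iha _ _ h1 v hv

theorem LIF.transfer {Name V : Type*} {voc : Vocab Name} [DecidableEq V] {dom : Type*}
    (D : Interp Name dom) (α : LIF Name V voc) :
    ∀ ν1 ν2 μ1 μ2 : V → dom, (ν1, ν2) ∈ α.sem D → (∀ v ∈ α.Isyn, μ1 v = ν1 v) →
      (∀ v ∈ α.Osyn, μ2 v = ν2 v) → (∀ v, v ∉ α.Osyn → μ2 v = μ1 v) →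
      (μ1, μ2) ∈ α.sem D := by
  induction α with
  | idE =>
    intro ν1 ν2 μ1 μ2 h hI hO hN
    exact funext fun v => (hN v (by simp [LIF.Osyn])).symm
  | atom M xs ys hx hy =>
    intro ν1 ν2 μ1 μ2 h hI hO hN
    simp only [LIF.Isyn, LIF.Osyn, List.mem_toFinset] at hI hO hN
    refine ⟨?_, fun v hv => (hN v hv).symm⟩
    have e1 : xs.map μ1 = xs.map ν1 := List.map_congr_left hI
    have e2 : ys.map μ2 = ys.map ν2 := List.map_congr_left hO
    have := h.1
    simp only [e1, e2]
    exact this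
  | union a b iha ihb =>
    intro ν1 ν2 μ1 μ2 h hI hO hN
    simp only [LIF.Isyn, LIF.Osyn, Finset.mem_union, Finset.mem_sdiff] at hI hO hN
    rcases h with h | h
    · left
      have := LIF.inertia D a _ _ h
      apply iha _ _ _ _ h <;> grind
    · right
      have := LIF.inertia D b _ _ h
      apply ihb _ _ _ _ h <;> grind
  | inter a b iha ihb =>
    intro ν1 ν2 μ1 μ2 h hI hO hN
    simp only [LIF.Isyn, LIF.Osyn, Finset.mem_union, Finset.mem_sdiff, Finset.mem_inter]
      at hI hO hN
    have h1 := LIF.inertia D a _ _ h.1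
    have h2 := LIF.inertia D b _ _ h.2
    constructor
    · apply iha _ _ _ _ h.1 <;> grind
    · apply ihb _ _ _ _ h.2 <;> grind
  | diff a b iha ihb =>
    intro ν1 ν2 μ1 μ2 h hI hO hN
    simp only [LIF.Isyn, LIF.Osyn, Finset.mem_union, Finset.mem_sdiff] at hI hO hN
    have h1 := LIF.inertia D a _ _ h.1
    refine ⟨iha _ _ _ _ h.1 (by grind) hO hN, fun hb => h.2 ?_⟩
    have h2 := LIF.inertia D b _ _ hb
    apply ihb _ _ _ _ hb <;> grind
  | comp a b iha ihb =>
    rintro ν1 ν2 μ1 μ2 ⟨ν3, ha, hb⟩ hI hO hN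
    simp only [LIF.Isyn, LIF.Osyn, Finset.mem_union, Finset.mem_sdiff] at hI hO hN
    have h1 := LIF.inertia D a _ _ ha
    have h2 := LIF.inertia D b _ _ hb
    simp only at h1 h2 ha hb
    refine ⟨fun v => if v ∈ a.Osyn then ν3 v else μ1 v, ?_, ?_⟩
    · apply iha _ _ _ _ ha <;> grind
    · apply ihb _ _ _ _ hb <;> grind
  | cyll Z a iha =>
    rintro ν1 ν2 μ1 μ2 ⟨ν3, ha, hb⟩ hI hO hN
    simp only [LIF.Isyn, LIF.Osyn, Finset.mem_union, Finset.mem_sdiff] at hI hO hN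
    have h1 := LIF.inertia D a _ _ ha
    simp only [BRV.AgreeOn, Set.mem_compl_iff, Finset.mem_coe] at h1 ha hb
    refine ⟨fun v => if v ∈ Z then ν3 v else μ1 v, ?_, ?_⟩
    · apply iha _ _ _ _ ha <;> grind
    · intro v hv
      simp only [Set.mem_compl_iff, Finset.mem_coe] at hv
      simp [hv]
  | cylr Z a iha =>
    rintro ν1 ν2 μ1 μ2 ⟨ν3, ha, hb⟩ hI hO hN
    simp only [LIF.Isyn, LIF.Osyn, Finset.mem_union] at hI hO hN
    have h1 := LIF.inertia D a _ _ ha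
    simp only [BRV.AgreeOn, Set.mem_compl_iff, Finset.mem_coe] at h1 ha hb
    refine ⟨fun v => if v ∈ a.Osyn then ν3 v else μ1 v, ?_, ?_⟩
    · apply iha _ _ _ _ ha <;> grind
    · intro v hv
      simp only [Set.mem_compl_iff, Finset.mem_coe] at hv
      grind
  | sellr x y a iha =>
    rintro ν1 ν2 μ1 μ2 ⟨ha, hb⟩ hI hO hN
    simp only [LIF.Isyn, LIF.Osyn] at hI hO hN
    have h1 := LIF.inertia D a _ _ ha
    simp only at hb
    refine ⟨?_, ?_⟩
    · apply iha _ _ _ _ ha <;> grind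
    · show μ1 x = μ2 y
      grind
  | sell x y a iha =>
    rintro ν1 ν2 μ1 μ2 ⟨ha, hb⟩ hI hO hN
    simp only [LIF.Isyn, LIF.Osyn] at hI hO hN
    simp only at hb
    refine ⟨?_, ?_⟩
    · apply iha _ _ _ _ ha <;> grind
    · show μ1 x = μ1 y
      grind
  | selr x y a iha =>
    rintro ν1 ν2 μ1 μ2 ⟨ha, hb⟩ hI hO hN
    simp only [LIF.Isyn, LIF.Osyn] at hI hO hN
    have h1 := LIF.inertia D a _ _ ha
    simp only at hb
    refine ⟨?_, ?_⟩
    · apply iha _ _ _ _ ha <;> grind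
    · show μ2 x = μ2 y
      grind

theorem stmt14 {Name V : Type*} [Nonempty Name] {voc : Vocab Name} [DecidableEq V]
    (dom : Type*) [Countable dom] [Infinite dom]
    (α β : LIF Name V voc)
    (h : β.Osyn ∩ β.Isyn = ∅) :
    ∀ D : Interp Name dom,
      (LIF.comp α β).sem D =
        (LIF.inter (LIF.cylr β.Osyn α) (LIF.cyll α.Osyn β)).sem D := by
  intro D
  have hd : ∀ v, v ∈ β.Isyn → v ∉ β.Osyn := by
    intro v h1 h2
    have : v ∈ β.Osyn ∩ β.Isyn := Finset.mem_inter.2 ⟨h2, h1⟩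
    simp [h] at this
  ext ⟨ν1, ν2⟩
  constructor
  · rintro ⟨ν3, ha, hb⟩
    refine ⟨⟨ν3, ha, fun v hv => ?_⟩, ⟨ν3, hb, fun v hv => ?_⟩⟩
    · exact LIF.inertia D β _ _ hb v (by simpa using hv)
    · exact (LIF.inertia D α _ _ ha v (by simpa using hv)).symm
  · rintro ⟨⟨ν3, ha, hag⟩, ⟨ν4, hb, _⟩⟩
    have h2 := LIF.inertia D β _ _ hb
    have h3 : ∀ v, v ∉ β.Osyn → ν3 v = ν2 v := fun v hv => hag v (by simpa using hv)
    refine ⟨ν3, ha, LIF.transfer D β _ _ _ _ hb ?_ (fun _ _ => rfl) ?_⟩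
    · intro v hv
      exact (h3 v (hd v hv)).trans (h2 v (hd v hv)).symm
    · intro v hv
      exact (h3 v hv).symm
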